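/- arXiv:2212.10118 — 3 statements merged into one kernel-verified Lean document; each statement's English description precedes it below -/
import Mathlib

section
/- Let s > 0, let R, C : ℕ → ℝ with R(k) > 0 and C(k) > 0 for all k ≥ 1, and let H : ℕ → ℝ with H(k) > 0 for all k satisfy, for all k ≥ 0, H(k) = (1/R(k+1)) / ( 1 + (1/(s·R(k+1)·C(k+1))) / ( 1 + (1/(s·C(k+1)))·H(k+1) ) ). Then for every n ≥ 1, H(0) = cf(L_n), where L_n is the list [1/R(1)] followed, for k = 1, …, n−1, by the pairs [1/(s·R(k)·C(k)), 1/(s·R(k+1)·C(k))], and ending with the two entries 1/(s·R(n)·C(n)) and H(n)/(s·C(n)). -/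
/-! The proof is by induction on the number of stages. Unfolding the recursion for the last
`H n` inside the final entry `H n / (s C n)` turns that entry into the tail
`[1/(s R(n+1) C n), 1/(s R(n+1) C(n+1)), H(n+1)/(s C(n+1))]` with the same value of `cf`, and
`cf` of a list depends on a tail only through the value of `cf` on that tail
(`cf_append_congr`). -/

/-- Continued fraction of a finite list: cf [a₁,…,a_k] = a₁/(1 + a₂/(1 + ⋯/(1 + a_k))). -/
noncomputable def cf : List ℝ → ℝ
  | [] => 0
  | a :: l => a / (1 + cf l)

theorem cf_append_congr (l : List ℝ) {t u : List ℝ} (h : cf t = cf u) :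
    cf (l ++ t) = cf (l ++ u) := by
  induction l with
  | nil => simpa using h
  | cons a l ih => simp only [List.cons_append, cf, ih]

theorem transfer_function_continued_fraction
    (s : ℝ) (hs : 0 < s)
    (R C : ℕ → ℝ)
    (hR : ∀ k : ℕ, 0 < R k) (hC : ∀ k : ℕ, 0 < C k)
    (H : ℕ → ℝ) (hH : ∀ k : ℕ, 0 < H k)
    (hrec : ∀ k : ℕ,
      H k =
        (1 / R (k + 1)) /
          (1 + (1 / (s * R (k + 1) * C (k + 1))) /
            (1 + (1 / (s * C (k + 1))) * H (k + 1)))) :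
    ∀ n : ℕ, 1 ≤ n →
      H 0 =
        cf ((1 / R 1) ::
          ((List.range (n - 1)).flatMap fun j =>
            [1 / (s * R (j + 1) * C (j + 1)), 1 / (s * R (j + 2) * C (j + 1))]) ++
          [1 / (s * R n * C n), H n / (s * C n)]) := by
  intro n hn
  induction n, hn using Nat.le_induction with
  | base =>
    rw [hrec 0]
    simp [cf, div_eq_inv_mul]
  | succ n hn ih =>
    obtain ⟨m, rfl⟩ : ∃ m, n = m + 1 := ⟨n - 1, by omega⟩
    rw [ih]
    simp only [Nat.add_sub_cancel, List.range_succ, List.flatMap_append, List.flatMap_cons,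
      List.flatMap_nil, List.append_nil, List.cons_append, List.append_assoc, List.nil_append]
    rw [← List.cons_append, ← List.cons_append]
    apply cf_append_congr
    -- The unfolded `H (m + 1) / (s C)` is the tail fraction, its numerator divided by `s C`.
    have key : H (m + 1) / (s * C (m + 1)) =
        cf [1 / (s * R (m + 2) * C (m + 1)), 1 / (s * R (m + 2) * C (m + 2)),
          H (m + 2) / (s * C (m + 2))] := by
      rw [hrec (m + 1), div_right_comm, div_div (1 : ℝ)]
      simp only [cf, add_zero, div_one]
      rw [one_div_mul_eq_div, show R (m + 1 + 1) * (s * C (m + 1)) = s * R (m + 2) * C (m + 1) by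
        ring]
    rw [cf, cf, key]
    simp [cf]
end

section
/- For real numbers z > 0, σ > 0, ρ > 0 and every integer n ≥ 1, cf([a_1(z,σ,ρ), …, a_{n+1}(z,σ,ρ)]) = z / ( 1 + cf([a_1(z/σ,ρ,σ), …, a_n(z/σ,ρ,σ)]) ), where a_k is the fractal Cauer continued-fraction entry sequence. (This is the truncated form of the functional relation g(Z(s),σ,ρ) = Z(s)/(1 + g(Z(σs),ρ,σ)), in which the roles of σ and ρ are permuted.) -/
/-- The entries of the continued-fraction expansion of the transfer function of a
fractal Cauer ladder network: a₁ = z, a_{2m} = z·σ^{-m}·ρ^{-(m-1)},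
a_{2m+1} = z·σ^{-m}·ρ^{-m} (m ≥ 1). -/
noncomputable def fractalEntry (z σ ρ : ℝ) (k : ℕ) : ℝ :=
  if k = 1 then z
  else if k % 2 = 0 then z * σ ^ (-(k / 2 : ℤ)) * ρ ^ (-((k / 2 : ℤ) - 1))
  else z * σ ^ (-(k / 2 : ℤ)) * ρ ^ (-(k / 2 : ℤ))

/-- Even and odd indices trade places under the shift, which is why `σ` and `ρ` are swapped;
after the swap, one factor `σ⁻¹` is left over and is absorbed in `z / σ`. -/
lemma fractalEntry_shift (z σ ρ : ℝ) (hσ : σ ≠ 0) (i : ℕ) :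
    fractalEntry z σ ρ (i + 2) = fractalEntry (z / σ) ρ σ (i + 1) := by
  unfold fractalEntry
  rcases Nat.even_or_odd' i with ⟨m, rfl | rfl⟩
  · have h1 : ((2 * m + 2 : ℕ) : ℤ) / 2 = m + 1 := by omega
    have h2 : ((2 * m + 1 : ℕ) : ℤ) / 2 = m := by omega
    have h3 : (2 * m + 2) % 2 = 0 := by omega
    have h4 : ¬ (2 * m + 1) % 2 = 0 := by omega
    have h5 : ¬ 2 * m + 2 = 1 := by omega
    rw [if_neg h5, if_pos h3, if_neg h4, h1, h2, neg_add, zpow_add₀ hσ, add_sub_cancel_right,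
      zpow_neg_one]
    split_ifs with h
    · obtain rfl : m = 0 := by omega
      simp [div_eq_mul_inv]
    · ring
  · have h1 : ((2 * m + 1 + 2 : ℕ) : ℤ) / 2 = m + 1 := by omega
    have h2 : ((2 * m + 1 + 1 : ℕ) : ℤ) / 2 = m + 1 := by omega
    have h3 : ¬ (2 * m + 1 + 2) % 2 = 0 := by omega
    have h4 : (2 * m + 1 + 1) % 2 = 0 := by omega
    have h5 : ¬ 2 * m + 1 + 2 = 1 := by omega
    have h6 : ¬ 2 * m + 1 + 1 = 1 := by omega
    rw [if_neg h5, if_neg h3, if_neg h6, if_pos h4, h1, h2, add_sub_cancel_right, neg_add,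
      zpow_add₀ hσ, zpow_neg_one]
    ring

theorem fractal_cf_functional_relation_truncated
    (z σ ρ : ℝ) (hz : 0 < z) (hσ : 0 < σ) (hρ : 0 < ρ) :
    ∀ n : ℕ, 1 ≤ n →
      cf ((List.range (n + 1)).map fun i => fractalEntry z σ ρ (i + 1)) =
        z / (1 + cf ((List.range n).map fun i => fractalEntry (z / σ) ρ σ (i + 1))) := by
  intro n _
  rw [List.range_succ_eq_map, List.map_cons, List.map_map, cf]
  have h : ((fun i => fractalEntry z σ ρ (i + 1)) ∘ Nat.succ) =
      fun i => fractalEntry (z / σ) ρ σ (i + 1) :=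
    funext fun i => fractalEntry_shift z σ ρ hσ.ne' i
  rw [h]
  simp [fractalEntry]
end

section
/- Let σ > 0, ρ > 0 with σ·ρ ≠ 1, let K₁ > 0, K₂ > 0, let ε > −1, and let n₁, n₂ ∈ ℝ. If for every real z > 0 one has both K₁·z^{n₁} · K₂·(z/σ)^{n₂} = z/(1+ε) and K₂·z^{n₂} · K₁·(z/ρ)^{n₁} = z/(1+ε), then n₁ = ln(σ)/ln(σρ) (and consequently n₂ = ln(ρ)/ln(σρ)). -/
/-!
Taking logarithms turns both relations into affine identities in `log z`. Comparing the first one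
at `z = 1` and `z = e` gives `n₁ + n₂ = 1`; comparing the two at `z = 1` gives
`n₂ * log σ = n₁ * log ρ`. This linear system has determinant `log σ + log ρ = log (σ * ρ)`,
nonzero since `σ * ρ ≠ 1`.
-/

/-- The logarithmic form of one functional relation. -/
lemma log_relation {A B τ c a b z : ℝ} (hA : 0 < A) (hB : 0 < B) (hτ : 0 < τ) (hc : 0 < c)
    (hz : 0 < z) (h : A * z ^ a * (B * (z / τ) ^ b) = z / c) :
    Real.log A + a * Real.log z + (Real.log B + b * (Real.log z - Real.log τ))
      = Real.log z - Real.log c := by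
  have hza : 0 < z ^ a := Real.rpow_pos_of_pos hz a
  have hzτ : 0 < z / τ := div_pos hz hτ
  have hzb : 0 < (z / τ) ^ b := Real.rpow_pos_of_pos hzτ b
  have hlog := congrArg Real.log h
  rwa [Real.log_mul (mul_pos hA hza).ne' (mul_pos hB hzb).ne', Real.log_mul hA.ne' hza.ne',
    Real.log_mul hB.ne' hzb.ne', Real.log_rpow hz, Real.log_rpow hzτ,
    Real.log_div hz.ne' hτ.ne', Real.log_div hz.ne' hc.ne'] at hlog

theorem fractional_exponent_of_fractal_cauer
    (σ ρ K₁ K₂ ε n₁ n₂ : ℝ)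
    (hσ : 0 < σ) (hρ : 0 < ρ) (hσρ : σ * ρ ≠ 1)
    (hK₁ : 0 < K₁) (hK₂ : 0 < K₂) (hε : -1 < ε)
    (hrel₁ : ∀ z : ℝ, 0 < z →
      K₁ * z ^ n₁ * (K₂ * (z / σ) ^ n₂) = z / (1 + ε))
    (hrel₂ : ∀ z : ℝ, 0 < z →
      K₂ * z ^ n₂ * (K₁ * (z / ρ) ^ n₁) = z / (1 + ε)) :
    n₁ = Real.log σ / Real.log (σ * ρ) ∧ n₂ = Real.log ρ / Real.log (σ * ρ) := by
  have hc : 0 < 1 + ε := by linarith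
  have h₁ := log_relation hK₁ hK₂ hσ hc one_pos (hrel₁ 1 one_pos)
  have h₂ := log_relation hK₂ hK₁ hρ hc one_pos (hrel₂ 1 one_pos)
  have he := log_relation hK₁ hK₂ hσ hc (Real.exp_pos 1) (hrel₁ _ (Real.exp_pos 1))
  rw [Real.log_one] at h₁ h₂
  rw [Real.log_exp] at he
  have hsum : n₁ + n₂ = 1 := by linarith
  have hbal : n₂ * Real.log σ = n₁ * Real.log ρ := by linarith
  have hdet : Real.log (σ * ρ) ≠ 0 :=
    Real.log_ne_zero_of_pos_of_ne_one (mul_pos hσ hρ) hσρ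
  rw [eq_div_iff hdet, eq_div_iff hdet, Real.log_mul hσ.ne' hρ.ne']
  constructor
  · linear_combination Real.log σ * hsum - hbal
  · linear_combination Real.log ρ * hsum + hbal
end
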